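/- arXiv:1407.3351 — 5 statements merged into one kernel-verified Lean document; each statement's English description precedes it below -/
import Mathlib

section
/- Let Λ be a fractional ideal of 𝕂 and let T_Λ denote the set of families (x_a), indexed by the nonzero elements a of R, such that each x_a ∈ 𝕂/Λ satisfies a·x_a = 0 and b·x_{ab} = x_a for all nonzero a, b ∈ R (the Tate module of ℂ/Λ). Then the map sending an R-module homomorphism φ : 𝕂/R → 𝕂/Λ to the family (φ(a⁻¹ + R))_a is an isomorphism of R-modules from Hom_R(𝕂/R, 𝕂/Λ) onto T_Λ; moreover, φ is an R-module isomorphism if and only if for every nonzero a ∈ R the element φ(a⁻¹ + R) generates the R-module {t ∈ 𝕂/Λ : a·t = 0} of a-torsion points of 𝕂/Λ. -/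
/-!
Every element of `K` is `r / a` with `r, a ∈ R`, `a ≠ 0`, so a homomorphism `φ` on `K ⧸ R` is
determined by its values at the classes of `a⁻¹`, and conversely a compatible family `x` defines a
homomorphism `r / a ↦ r • x_a`: the value does not depend on the fraction, because both `x_a` and
`x_b` are multiples of `x_{ab}`, and it vanishes on `R` because `x_1 = 0`.

For the second part, the `a`-torsion of `K ⧸ R` is generated by the class of `a⁻¹`, a property that
any isomorphism transports. Conversely, if each `φ(a⁻¹)` generates the `a`-torsion of `K ⧸ Λ`, then
`φ` is surjective since `K ⧸ Λ` is a torsion module (`Λ ≠ 0`). If moreover `φ(u / a) = 0`, then `u`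
kills the whole `a`-torsion `a⁻¹Λ ⧸ Λ`, so `(u / a) Λ ⊆ Λ`; as `Λ` is finitely generated and nonzero,
`u / a` is integral over `R`, hence lies in `R`, which gives injectivity.
-/


open NumberField

/-- The "Tate module" of `𝕂 ⧸ Λ`: families `(x_a)` indexed by the nonzero elements `a` of the
ring of integers `R = 𝓞 K`, with `x_a ∈ K ⧸ Λ`, `a • x_a = 0` and `b • x_{a*b} = x_a`. -/
def tateSet (K : Type*) [Field K] [NumberField K] (Λ : Submodule (𝓞 K) K) :
    Set ({a : 𝓞 K // a ≠ 0} → K ⧸ Λ) :=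
  {x | (∀ a : {a : 𝓞 K // a ≠ 0}, (a : 𝓞 K) • x a = 0) ∧
    ∀ a b : {a : 𝓞 K // a ≠ 0}, (b : 𝓞 K) • x ⟨a.1 * b.1, mul_ne_zero a.2 b.2⟩ = x a}

/-- The map `Hom_R(𝕂/R, 𝕂/Λ) → (K ⧸ Λ)^{R∖{0}}`, `φ ↦ (φ(a⁻¹ + R))_a`. -/
noncomputable def tateMap (K : Type*) [Field K] [NumberField K] (Λ : Submodule (𝓞 K) K) :
    ((K ⧸ (1 : Submodule (𝓞 K) K)) →ₗ[𝓞 K] (K ⧸ Λ)) → ({a : 𝓞 K // a ≠ 0} → K ⧸ Λ) :=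
  fun φ a => φ (Submodule.Quotient.mk ((algebraMap (𝓞 K) K a.1)⁻¹))

section TateModule

theorem algebraMap_ne {K : Type*} [Field K] (a : {a : 𝓞 K // a ≠ 0}) :
    algebraMap (𝓞 K) K a.1 ≠ 0 := by
  simpa using a.2

variable {K : Type*} [Field K] [NumberField K] {Λ : Submodule (𝓞 K) K}

theorem exists_frac (k : K) : ∃ (r : 𝓞 K) (a : {a : 𝓞 K // a ≠ 0}),
    k = algebraMap (𝓞 K) K r * (algebraMap (𝓞 K) K a.1)⁻¹ := by
  obtain ⟨r, a, ha, rfl⟩ := IsFractionRing.div_surjective (A := 𝓞 K) k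
  exact ⟨r, ⟨a, nonZeroDivisors.ne_zero ha⟩, div_eq_mul_inv _ _⟩

theorem apply_frac (φ : (K ⧸ (1 : Submodule (𝓞 K) K)) →ₗ[𝓞 K] (K ⧸ Λ))
    (r : 𝓞 K) (a : {a : 𝓞 K // a ≠ 0}) :
    φ (Submodule.Quotient.mk (algebraMap (𝓞 K) K r * (algebraMap (𝓞 K) K a.1)⁻¹)) =
      r • tateMap K Λ φ a := by
  rw [← Algebra.smul_def, Submodule.Quotient.mk_smul, map_smul]
  rfl

/-- `r • x_a` depends only on the fraction `r / a`: both `x_a` and `x_b` are multiples of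
`x_{ab}`. -/
theorem smul_eq_of_frac_eq {x : {a : 𝓞 K // a ≠ 0} → K ⧸ Λ} (hx : x ∈ tateSet K Λ)
    {r s : 𝓞 K} {a b : {a : 𝓞 K // a ≠ 0}}
    (h : algebraMap (𝓞 K) K r * (algebraMap (𝓞 K) K a.1)⁻¹ =
      algebraMap (𝓞 K) K s * (algebraMap (𝓞 K) K b.1)⁻¹) :
    r • x a = s • x b := by
  have hab : (⟨b.1 * a.1, mul_ne_zero b.2 a.2⟩ : {a : 𝓞 K // a ≠ 0}) =
      ⟨a.1 * b.1, mul_ne_zero a.2 b.2⟩ := Subtype.ext (mul_comm _ _)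
  have h' : r * b.1 = s * a.1 := by
    apply FaithfulSMul.algebraMap_injective (𝓞 K) K
    have ha := algebraMap_ne a
    have hb := algebraMap_ne b
    field_simp at h
    simp only [map_mul]
    linear_combination h
  rw [← hx.2 a b, ← hx.2 b a, hab, smul_smul, smul_smul, h']

/-- A compatible family `x` gives a homomorphism on `K` sending `r / a` to `r • x_a`. -/
theorem exists_lift {x : {a : 𝓞 K // a ≠ 0} → K ⧸ Λ} (hx : x ∈ tateSet K Λ) :
    ∃ f : K →ₗ[𝓞 K] (K ⧸ Λ), ∀ (r : 𝓞 K) (a : {a : 𝓞 K // a ≠ 0}),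
      f (algebraMap (𝓞 K) K r * (algebraMap (𝓞 K) K a.1)⁻¹) = r • x a := by
  choose num den hfrac using exists_frac (K := K)
  have key : ∀ (k : K) (r : 𝓞 K) (a : {a : 𝓞 K // a ≠ 0}),
      k = algebraMap (𝓞 K) K r * (algebraMap (𝓞 K) K a.1)⁻¹ → num k • x (den k) = r • x a :=
    fun k r a h => smul_eq_of_frac_eq hx ((hfrac k).symm.trans h)
  refine ⟨{ toFun := fun k => num k • x (den k), map_add' := ?_, map_smul' := ?_ }, ?_⟩
  · intro k l
    obtain ⟨r, a, hk⟩ := exists_frac k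
    obtain ⟨s, b, hl⟩ := exists_frac l
    have ha := algebraMap_ne a
    have hb := algebraMap_ne b
    rw [key k (r * b.1) ⟨a.1 * b.1, mul_ne_zero a.2 b.2⟩ (by rw [hk]; simp; field_simp),
      key l (s * a.1) ⟨a.1 * b.1, mul_ne_zero a.2 b.2⟩ (by rw [hl]; simp; field_simp),
      key (k + l) (r * b.1 + s * a.1) ⟨a.1 * b.1, mul_ne_zero a.2 b.2⟩
        (by rw [hk, hl]; simp; field_simp), add_smul]
  · intro c k
    obtain ⟨r, a, hk⟩ := exists_frac k
    rw [key k r a hk, key (c • k) (c * r) a (by rw [hk, Algebra.smul_def, map_mul, mul_assoc]),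
      RingHom.id_apply, mul_smul]
  · exact fun r a => key _ r a rfl

theorem exists_hom {x : {a : 𝓞 K // a ≠ 0} → K ⧸ Λ} (hx : x ∈ tateSet K Λ) :
    ∃ φ : (K ⧸ (1 : Submodule (𝓞 K) K)) →ₗ[𝓞 K] (K ⧸ Λ), tateMap K Λ φ = x := by
  obtain ⟨f, hf⟩ := exists_lift hx
  have hker : (1 : Submodule (𝓞 K) K) ≤ LinearMap.ker f := by
    intro k hk
    obtain ⟨r, rfl⟩ := Submodule.mem_one.1 hk
    have h1 : x ⟨1, one_ne_zero⟩ = 0 := by simpa using hx.1 ⟨1, one_ne_zero⟩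
    have := hf r ⟨1, one_ne_zero⟩
    rw [h1] at this
    simpa using this
  refine ⟨Submodule.liftQ _ f hker, funext fun a => ?_⟩
  have := hf 1 a
  rw [map_one, one_mul, one_smul] at this
  exact this

theorem tateMap_mem (φ : (K ⧸ (1 : Submodule (𝓞 K) K)) →ₗ[𝓞 K] (K ⧸ Λ)) :
    tateMap K Λ φ ∈ tateSet K Λ := by
  refine ⟨fun a => ?_, fun a b => ?_⟩
  · rw [← apply_frac, mul_inv_cancel₀ (algebraMap_ne a),
      (Submodule.Quotient.mk_eq_zero _).2 (Submodule.one_le.1 le_rfl), map_zero]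
  · have hb := algebraMap_ne b
    rw [← apply_frac, ← one_smul (𝓞 K) (tateMap K Λ φ a), ← apply_frac]
    congr 2
    simp only [map_mul, map_one]
    field_simp

theorem tateMap_injective : Function.Injective (tateMap K Λ) := by
  intro φ ψ h
  refine LinearMap.ext fun q => ?_
  obtain ⟨k, rfl⟩ := Submodule.Quotient.mk_surjective _ q
  obtain ⟨r, a, rfl⟩ := exists_frac k
  rw [apply_frac, apply_frac, h]

theorem span_tateMap_of_bijective {φ : (K ⧸ (1 : Submodule (𝓞 K) K)) →ₗ[𝓞 K] (K ⧸ Λ)}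
    (hφ : Function.Bijective φ) (a : {a : 𝓞 K // a ≠ 0}) :
    Submodule.span (𝓞 K) {tateMap K Λ φ a} =
      Submodule.torsionBy (𝓞 K) (K ⧸ Λ) (a : 𝓞 K) := by
  apply le_antisymm
  · rw [Submodule.span_singleton_le_iff_mem, Submodule.mem_torsionBy_iff]
    exact (tateMap_mem φ).1 a
  · intro t ht
    rw [Submodule.mem_torsionBy_iff] at ht
    obtain ⟨q, rfl⟩ := hφ.2 t
    obtain ⟨k, rfl⟩ := Submodule.Quotient.mk_surjective _ q
    rw [← map_smul] at ht
    have h0 := hφ.1 (ht.trans (map_zero φ).symm)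
    rw [← Submodule.Quotient.mk_smul, Submodule.Quotient.mk_eq_zero, Submodule.mem_one] at h0
    obtain ⟨r, hr⟩ := h0
    have hk : k = algebraMap (𝓞 K) K r * (algebraMap (𝓞 K) K a.1)⁻¹ := by
      have ha := algebraMap_ne a
      rw [hr, Algebra.smul_def]
      field_simp
    rw [hk, apply_frac]
    exact Submodule.smul_mem _ _ (Submodule.mem_span_singleton_self _)

/-- For nonzero `Λ`, the quotient `K ⧸ Λ` is a torsion module. -/
theorem exists_torsion (hne : Λ ≠ ⊥) (t : K ⧸ Λ) :
    ∃ a : {a : 𝓞 K // a ≠ 0}, (a : 𝓞 K) • t = 0 := by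
  obtain ⟨l, hl, hl0⟩ := Submodule.exists_mem_ne_zero_of_ne_bot hne
  obtain ⟨k, rfl⟩ := Submodule.Quotient.mk_surjective _ t
  obtain ⟨r, a, h⟩ := exists_frac (k / l)
  refine ⟨a, ?_⟩
  rw [← Submodule.Quotient.mk_smul, Submodule.Quotient.mk_eq_zero]
  have ha := algebraMap_ne a
  have : a.1 • k = r • l := by
    rw [Algebra.smul_def, Algebra.smul_def]
    field_simp at h
    linear_combination h
  rw [this]
  exact Λ.smul_mem r hl

/-- The multiplier ring of a finitely generated nonzero `Λ` is `R`, as `R` is integrally closed. -/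
theorem mem_one_of_mul_mem (hfg : Λ.FG) (hne : Λ ≠ ⊥) {z : K} (hz : ∀ l ∈ Λ, z * l ∈ Λ) :
    z ∈ (1 : Submodule (𝓞 K) K) := by
  have hint : IsIntegral (𝓞 K) z := isIntegral_of_smul_mem_submodule Λ hne hfg z hz
  exact Submodule.mem_one.2 (IsIntegrallyClosed.isIntegral_iff.1 hint)

theorem bijective_of_span_tateMap (hfg : Λ.FG) (hne : Λ ≠ ⊥)
    {φ : (K ⧸ (1 : Submodule (𝓞 K) K)) →ₗ[𝓞 K] (K ⧸ Λ)}
    (h : ∀ a : {a : 𝓞 K // a ≠ 0}, Submodule.span (𝓞 K) {tateMap K Λ φ a} =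
      Submodule.torsionBy (𝓞 K) (K ⧸ Λ) (a : 𝓞 K)) : Function.Bijective φ := by
  constructor
  · rw [injective_iff_map_eq_zero]
    intro q hq
    obtain ⟨k, rfl⟩ := Submodule.Quotient.mk_surjective _ q
    obtain ⟨u, a, rfl⟩ := exists_frac k
    rw [apply_frac] at hq
    have ha := algebraMap_ne a
    rw [Submodule.Quotient.mk_eq_zero]
    refine mem_one_of_mul_mem hfg hne fun l hl => ?_
    -- The class of `a⁻¹ l` is `a`-torsion, hence a multiple of `φ(a⁻¹)`, hence killed by `u`.
    have hmem : (Submodule.Quotient.mk ((algebraMap (𝓞 K) K a.1)⁻¹ * l) : K ⧸ Λ) ∈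
        Submodule.span (𝓞 K) {tateMap K Λ φ a} := by
      rw [h a, Submodule.mem_torsionBy_iff, ← Submodule.Quotient.mk_smul,
        Submodule.Quotient.mk_eq_zero, Algebra.smul_def, mul_inv_cancel_left₀ ha]
      exact hl
    obtain ⟨c, hc⟩ := Submodule.mem_span_singleton.1 hmem
    rw [mul_assoc, ← Algebra.smul_def, ← Submodule.Quotient.mk_eq_zero,
      Submodule.Quotient.mk_smul, ← hc, smul_comm, hq, smul_zero]
  · intro t
    obtain ⟨a, ha⟩ := exists_torsion hne t
    have hmem : t ∈ Submodule.span (𝓞 K) {tateMap K Λ φ a} := by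
      rw [h a, Submodule.mem_torsionBy_iff, ha]
    obtain ⟨c, rfl⟩ := Submodule.mem_span_singleton.1 hmem
    exact ⟨_, apply_frac φ c a⟩

end TateModule

/-- For a fractional ideal `Λ` of an imaginary quadratic field `K` with ring of
integers `R = 𝓞 K`, the map `φ ↦ (φ(a⁻¹ + R))_a` is an `R`-module isomorphism from
`Hom_R(𝕂/R, 𝕂/Λ)` onto the Tate module `T_Λ`; moreover `φ` is an isomorphism iff for every
nonzero `a ∈ R` the element `φ(a⁻¹ + R)` generates the `R`-module of `a`-torsion points of
`𝕂/Λ`. -/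
theorem stmt0 (K : Type*) [Field K] [NumberField K]
    (hdeg : Module.finrank ℚ K = 2) (himag : IsEmpty (K →+* ℝ))
    (Λ : Submodule (𝓞 K) K) (hfg : Λ.FG) (hne : Λ ≠ ⊥) :
    (∀ φ ψ : (K ⧸ (1 : Submodule (𝓞 K) K)) →ₗ[𝓞 K] (K ⧸ Λ),
        tateMap K Λ (φ + ψ) = tateMap K Λ φ + tateMap K Λ ψ) ∧
    (∀ (r : 𝓞 K) (φ : (K ⧸ (1 : Submodule (𝓞 K) K)) →ₗ[𝓞 K] (K ⧸ Λ)),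
        tateMap K Λ (r • φ) = r • tateMap K Λ φ) ∧
    Set.BijOn (tateMap K Λ) Set.univ (tateSet K Λ) ∧
    (∀ φ : (K ⧸ (1 : Submodule (𝓞 K) K)) →ₗ[𝓞 K] (K ⧸ Λ),
        Function.Bijective φ ↔
          ∀ a : {a : 𝓞 K // a ≠ 0},
            Submodule.span (𝓞 K) {tateMap K Λ φ a} =
              Submodule.torsionBy (𝓞 K) (K ⧸ Λ) (a : 𝓞 K)) := by
  exact ⟨fun _ _ => rfl, fun _ _ => rfl,
    ⟨fun φ _ => tateMap_mem φ, tateMap_injective.injOn, fun _ hx =>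
      (exists_hom hx).imp fun _ hφ => ⟨Set.mem_univ _, hφ⟩⟩,
    fun _ => ⟨span_tateMap_of_bijective, bijective_of_span_tateMap hfg hne⟩⟩
end

section
/- If (Λ, φ) and (Λ', φ') are invertible 1-dimensional 𝕂-lattices that are commensurable, then they coincide: Λ = Λ' and φ = φ'. -/
/-!
Write `M = Λ + Λ'`. For an invertible lattice, `φ` identifies `M/Λ` with the kernel `S` of the
composite `K/R → KΛ/Λ → KΛ/M`, and commensurability says that `Λ` and `Λ'` give the same composite,
so `M/Λ ≅ S ≅ M/Λ'` as `R`-modules. In particular `M/Λ` and `M/Λ'` have the same annihilator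
(`smul_mem_iff`). Since `KΛ` is a line, `Λ`, `Λ'` and `M` correspond to fractional ideals
`A, A' ≤ B` of `K`, and in a Dedekind domain `A = (A B⁻¹) B`, where the integral ideal `A B⁻¹` is
the annihilator of `B/A`. Hence the annihilator determines `A` (`fractionalIdeal_le`), so `Λ = Λ'`;
then `M = Λ`, and commensurability reads `φ = φ'`.
-/


open NumberField

variable (K : Type*) [Field K] [NumberField K] [Algebra K ℂ]
  [Algebra (𝓞 K) ℂ] [IsScalarTower (𝓞 K) K ℂ]

/-- A 1-dimensional `K`-lattice: a finitely generated `𝓞 K`-submodule `Λ ⊆ ℂ` with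
`Λ ⊗_R K ≅ K`, together with an `𝓞 K`-module map `φ : K/R → KΛ/Λ`; here `φ` is encoded as a
map into `ℂ ⧸ Λ` whose range lies in the image `KΛ/Λ` of the `K`-span of `Λ`. -/
structure OneDimKLattice where
  Λ : Submodule (𝓞 K) ℂ
  fg : Λ.FG
  rank_one : Nonempty (TensorProduct (𝓞 K) K ↥Λ ≃ₗ[K] K)
  φ : (K ⧸ (1 : Submodule (𝓞 K) K)) →ₗ[𝓞 K] (ℂ ⧸ Λ)
  range_le : LinearMap.range φ ≤
    (Submodule.restrictScalars (𝓞 K) (Submodule.span K (Λ : Set ℂ))).map Λ.mkQ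

namespace OneDimKLattice

variable {K}

/-- The submodule `KΛ/Λ ⊆ ℂ/Λ`. -/
noncomputable def KΛmodΛ (L : OneDimKLattice K) : Submodule (𝓞 K) (ℂ ⧸ L.Λ) :=
  (Submodule.restrictScalars (𝓞 K) (Submodule.span K (L.Λ : Set ℂ))).map L.Λ.mkQ

/-- `L` is invertible if `φ` is an isomorphism onto `KΛ/Λ`. -/
def Invertible (L : OneDimKLattice K) : Prop :=
  Function.Injective L.φ ∧ LinearMap.range L.φ = L.KΛmodΛ

/-- `L` is arithmetic if `Λ ⊆ K`. -/
def Arithmetic (L : OneDimKLattice K) : Prop :=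
  (L.Λ : Set ℂ) ⊆ Set.range (algebraMap K ℂ)

/-- Commensurability: `KΛ = KΛ'` and `φ = φ'` modulo `Λ + Λ'`. -/
def Commensurable (L L' : OneDimKLattice K) : Prop :=
  Submodule.span K (L.Λ : Set ℂ) = Submodule.span K (L'.Λ : Set ℂ) ∧
  (Submodule.mapQ L.Λ (L.Λ ⊔ L'.Λ) LinearMap.id
      (by rw [Submodule.comap_id]; exact le_sup_left)).comp L.φ =
  (Submodule.mapQ L'.Λ (L.Λ ⊔ L'.Λ) LinearMap.id
      (by rw [Submodule.comap_id]; exact le_sup_right)).comp L'.φ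

/-- Dilation equivalence: `L' = (kΛ, kφ)` for some nonzero `k ∈ ℂ`. -/
def Dilation (L L' : OneDimKLattice K) : Prop :=
  ∃ k : ℂ, k ≠ 0 ∧
    L'.Λ = L.Λ.map ((LinearMap.mul ℂ ℂ k).restrictScalars (𝓞 K)) ∧
    ∀ (ξ : K ⧸ (1 : Submodule (𝓞 K) K)) (z : ℂ),
      Submodule.Quotient.mk z = L.φ ξ → L'.φ ξ = Submodule.Quotient.mk (k * z)

end OneDimKLattice

open scoped nonZeroDivisors

namespace OneDimKLattice

/-- Inside a fractional ideal `B` of a Dedekind domain, an ideal `A ≤ B` equals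
`Ann(B/A) • B`; so if `Ann(B/A) ≤ Ann(B/A')` then `A ≤ A'`. -/
lemma fractionalIdeal_le {R F : Type*} [CommRing R] [IsDedekindDomain R] [Field F] [Algebra R F]
    [IsFractionRing R F] (A A' B : FractionalIdeal R⁰ F) (hA : A ≤ B)
    (h : ∀ r : R, (∀ b ∈ B, r • b ∈ A) → ∀ b ∈ B, r • b ∈ A') : A ≤ A' := by
  by_cases hB : B = 0
  · subst hB
    exact hA.trans (FractionalIdeal.zero_le _)
  have hone : B * B⁻¹ = 1 := mul_inv_cancel₀ hB
  have hAB : A * B⁻¹ * B = A := by rw [mul_assoc, mul_comm B⁻¹, hone, mul_one]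
  have hle : A * B⁻¹ ≤ 1 := by
    rw [← hone]
    exact mul_le_mul_left hA _
  rw [← hAB, FractionalIdeal.mul_le]
  intro x hx b hb
  obtain ⟨r, rfl⟩ := (FractionalIdeal.mem_one_iff _).1 (hle hx)
  rw [← Algebra.smul_def]
  refine h r (fun c hc => ?_) b hb
  rw [Algebra.smul_def, ← hAB]
  exact FractionalIdeal.mul_mem_mul hx hc

variable {K}

/-- `Λ` lies on a `K`-line, because `K ⊗ Λ` is one-dimensional and maps onto `KΛ`. The generator
is the image of a basis vector of `K ⊗ Λ`. -/
lemma exists_generator (L : OneDimKLattice K) :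
    ∃ v : ℂ, Submodule.span K (L.Λ : Set ℂ) ≤ Submodule.span K {v} := by
  obtain ⟨e⟩ := L.rank_one
  let f : TensorProduct (𝓞 K) K L.Λ →ₗ[K] ℂ :=
    TensorProduct.AlgebraTensorModule.lift
      ((LinearMap.toSpanSingleton K (L.Λ →ₗ[𝓞 K] ℂ) L.Λ.subtype))
  have hf : ∀ w : L.Λ, f (1 ⊗ₜ w) = w := fun w => by simp [f]
  refine ⟨f (e.symm 1), Submodule.span_le.2 fun w hw => ?_⟩
  refine Submodule.mem_span_singleton.2 ⟨e (1 ⊗ₜ ⟨w, hw⟩), ?_⟩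
  rw [← map_smul, ← map_smul, smul_eq_mul, mul_one, e.symm_apply_apply, hf]

/-- For `Λ ≤ M ≤ KΛ`, invertibility identifies `M/Λ` with the kernel of `K/R → ℂ/M`; in particular
the two have the same annihilator. -/
lemma smul_mem_iff (L : OneDimKLattice K) (hL : L.Invertible) (M : Submodule (𝓞 K) ℂ)
    (hM : L.Λ ≤ M.comap LinearMap.id)
    (hMV : ∀ m ∈ M, m ∈ Submodule.span K (L.Λ : Set ℂ)) (r : 𝓞 K) :
    (∀ m ∈ M, r • m ∈ L.Λ) ↔
      ∀ s, (Submodule.mapQ L.Λ M LinearMap.id hM).comp L.φ s = 0 → r • s = 0 := by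
  constructor
  · intro h s hs
    apply hL.1
    obtain ⟨m, hm⟩ := Submodule.Quotient.mk_surjective _ (L.φ s)
    rw [LinearMap.comp_apply, ← hm, Submodule.mapQ_apply, LinearMap.id_apply,
      Submodule.Quotient.mk_eq_zero] at hs
    rw [map_smul, map_zero, ← hm, ← Submodule.Quotient.mk_smul, Submodule.Quotient.mk_eq_zero]
    exact h m hs
  · intro h m hm
    have hr : Submodule.Quotient.mk m ∈ LinearMap.range L.φ := by
      rw [hL.2]
      exact Submodule.mem_map_of_mem (f := L.Λ.mkQ) (hMV m hm)
    obtain ⟨s, hs⟩ := hr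
    have h0 : r • s = 0 := h s (by
      rw [LinearMap.comp_apply, hs, Submodule.mapQ_apply, LinearMap.id_apply,
        Submodule.Quotient.mk_eq_zero]
      exact hm)
    rw [← Submodule.Quotient.mk_eq_zero L.Λ, Submodule.Quotient.mk_smul, ← hs, ← map_smul, h0,
      map_zero]

/-- The version of `fractionalIdeal_le` for finitely generated submodules of a `K`-line in `ℂ`. -/
lemma le_of_annihilator_le (v : ℂ) (P P' M : Submodule (𝓞 K) ℂ)
    (hP' : P'.FG) (hM : M.FG) (hPfg : P.FG)
    (hPM : P ≤ M) (hP'M : P' ≤ M) (hMv : ∀ m ∈ M, m ∈ Submodule.span K {v})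
    (h : ∀ r : 𝓞 K, (∀ m ∈ M, r • m ∈ P) → ∀ m ∈ M, r • m ∈ P') : P ≤ P' := by
  by_cases hv : v = 0
  · intro p hp
    have := hMv p (hPM hp)
    rw [hv, Submodule.span_zero_singleton, Submodule.mem_bot] at this
    rw [this]
    exact zero_mem _
  let g : K →ₗ[𝓞 K] ℂ := (LinearMap.toSpanSingleton K ℂ v).restrictScalars (𝓞 K)
  have hg : Function.Injective g := smul_left_injective K hv
  -- A submodule `N` of `M` lies in the line, so it is the image of the fractional ideal `g⁻¹ N`.
  have key : ∀ N : Submodule (𝓞 K) ℂ, N.FG → N ≤ M →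
      IsFractional (𝓞 K)⁰ (N.comap g) := by
    intro N hN hNM
    refine FractionalIdeal.isFractional_of_fg (Submodule.fg_of_fg_map_injective g hg ?_)
    rwa [Submodule.map_comap_eq_of_le]
    intro n hn
    obtain ⟨c, hc⟩ := Submodule.mem_span_singleton.1 (hMv n (hNM hn))
    exact ⟨c, hc⟩
  have hle := fractionalIdeal_le (⟨_, key P hPfg hPM⟩ : FractionalIdeal (𝓞 K)⁰ K)
    ⟨_, key P' hP' hP'M⟩ ⟨_, key M hM le_rfl⟩
    (fun x hx => hPM hx) (fun r hr b hb => by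
      change g (r • b) ∈ P'
      rw [map_smul]
      refine h r (fun m hm => ?_) (g b) hb
      obtain ⟨c, rfl⟩ := Submodule.mem_span_singleton.1 (hMv m hm)
      have := hr c hm
      change g (r • c) ∈ P at this
      rwa [map_smul] at this)
  intro p hp
  obtain ⟨c, rfl⟩ := Submodule.mem_span_singleton.1 (hMv p (hPM hp))
  exact hle (show c ∈ P.comap g from hp)

end OneDimKLattice

/-- Two commensurable invertible 1-dimensional `K`-lattices coincide:
`Λ = Λ'` and `φ = φ'`. -/
theorem stmt4 (K : Type*) [Field K] [NumberField K] [Algebra K ℂ]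
    [Algebra (𝓞 K) ℂ] [IsScalarTower (𝓞 K) K ℂ]
    (hdeg : Module.finrank ℚ K = 2) (himag : IsEmpty (K →+* ℝ))
    (L L' : OneDimKLattice K)
    (hL : L.Invertible) (hL' : L'.Invertible)
    (hcomm : L.Commensurable L') :
    L = L' := by
  have hsup : ∀ m ∈ L.Λ ⊔ L'.Λ, m ∈ Submodule.span K (L.Λ : Set ℂ) := by
    have : L.Λ ⊔ L'.Λ ≤ (Submodule.span K (L.Λ : Set ℂ)).restrictScalars (𝓞 K) :=
      sup_le Submodule.subset_span (by
        rw [hcomm.1]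
        exact Submodule.subset_span)
    exact this
  obtain ⟨v, hv⟩ := L.exists_generator
  have hfg : (L.Λ ⊔ L'.Λ).FG := L.fg.sup L'.fg
  have hann : ∀ r : 𝓞 K, (∀ m ∈ L.Λ ⊔ L'.Λ, r • m ∈ L.Λ) ↔ ∀ m ∈ L.Λ ⊔ L'.Λ, r • m ∈ L'.Λ := by
    intro r
    rw [L.smul_mem_iff hL _ (by rw [Submodule.comap_id]; exact le_sup_left) hsup,
      L'.smul_mem_iff hL' _ (by rw [Submodule.comap_id]; exact le_sup_right)
        (by rw [← hcomm.1]; exact hsup), hcomm.2]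
  have hΛ : L.Λ = L'.Λ := le_antisymm
    (OneDimKLattice.le_of_annihilator_le v _ _ _ L'.fg hfg L.fg le_sup_left le_sup_right
      (fun m hm => hv (hsup m hm)) fun r => (hann r).1)
    (OneDimKLattice.le_of_annihilator_le v _ _ _ L.fg hfg L'.fg le_sup_right le_sup_left
      (fun m hm => hv (hsup m hm)) fun r => (hann r).2)
  have hφ := hcomm.2
  clear hann hfg hv hsup hcomm hL hL'
  obtain ⟨Λ, _, _, φ, _⟩ := L
  obtain ⟨Λ', _, _, φ', _⟩ := L'
  obtain rfl : Λ = Λ' := hΛ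
  congr 1
  refine LinearMap.ext fun s => ?_
  have hs := LinearMap.congr_fun hφ s
  simp only [LinearMap.comp_apply] at hs
  obtain ⟨x, hx⟩ := Submodule.Quotient.mk_surjective _ (φ s)
  obtain ⟨y, hy⟩ := Submodule.Quotient.mk_surjective _ (φ' s)
  rw [← hx, ← hy] at hs ⊢
  rw [Submodule.mapQ_apply, Submodule.mapQ_apply, Submodule.Quotient.eq, sup_idem] at hs
  exact (Submodule.Quotient.eq _).2 hs
end

section
/- Fix fractional ideals Λ₁, …, Λ_h ⊆ 𝕂 representing the ideal classes of the class group Cl(R). If (Λ, φ) and (Λ', φ') are commensurable 1-dimensional 𝕂-lattices, then there exists a nonzero k ∈ ℂ such that kΛ = Λ_i for some i ∈ {1, …, h} and kΛ' ⊆ 𝕂, i.e. kΛ' is a fractional ideal of 𝕂. -/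
/-!
The `K`-span of `Λ` is a line: two elements of `Λ` are `K`-proportional because they are so in
`K ⊗ Λ ≅ K`, and the relation is carried to `ℂ` by the multiplication map `K ⊗ Λ → ℂ`
(`OneDimKLattice.exists_span_le`). Hence, for a nonzero `v ∈ Λ`, the module `v⁻¹Λ` is a fractional
ideal of `K`, and scaling it by a suitable `c ∈ K` gives one of the representatives. With
`k = c v⁻¹`, the inclusion `kΛ' ⊆ K` follows from `Λ' ⊆ KΛ' = KΛ = K v`.
-/

open NumberField

variable (K : Type*) [Field K] [NumberField K] [Algebra K ℂ]
  [Algebra (𝓞 K) ℂ] [IsScalarTower (𝓞 K) K ℂ]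

open scoped TensorProduct in
/-- The `K`-span of a 1-dimensional `K`-lattice lies in the line through a nonzero lattice
vector. -/
theorem OneDimKLattice.exists_span_le {K : Type*} [Field K] [NumberField K] [Algebra K ℂ]
    [Algebra (𝓞 K) ℂ] [IsScalarTower (𝓞 K) K ℂ] (L : OneDimKLattice K) :
    ∃ v ∈ L.Λ, v ≠ 0 ∧ Submodule.span K (L.Λ : Set ℂ) ≤ Submodule.span K {v} := by
  obtain ⟨e⟩ := L.rank_one
  have hne : L.Λ ≠ ⊥ := by
    intro hbot
    have : Subsingleton L.Λ := by rw [hbot]; infer_instance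
    have : Subsingleton (TensorProduct (𝓞 K) K L.Λ) := inferInstance
    exact one_ne_zero (e.symm.injective (Subsingleton.elim (e.symm 1) (e.symm 0)))
  obtain ⟨v, hv, hv0⟩ := Submodule.exists_mem_ne_zero_of_ne_bot hne
  refine ⟨v, hv, hv0, Submodule.span_le.2 fun w hw => ?_⟩
  let m : TensorProduct (𝓞 K) K L.Λ →ₗ[K] ℂ := L.Λ.subtype.liftBaseChange K
  have hm (x : L.Λ) : m (1 ⊗ₜ[𝓞 K] x) = x := by simp [m]
  set p := e (1 ⊗ₜ[𝓞 K] ⟨v, hv⟩) with hp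
  set q := e (1 ⊗ₜ[𝓞 K] ⟨w, hw⟩) with hq
  have hp0 : p ≠ 0 := by
    intro h0
    have h1 := hm ⟨v, hv⟩
    rw [e.map_eq_zero_iff.1 (hp.symm.trans h0), map_zero] at h1
    exact hv0 h1.symm
  have hrel : (1 : K) ⊗ₜ[𝓞 K] (⟨w, hw⟩ : L.Λ) = (q / p) • ((1 : K) ⊗ₜ[𝓞 K] (⟨v, hv⟩ : L.Λ)) := by
    apply e.injective
    rw [map_smul, ← hp, ← hq, smul_eq_mul, div_mul_cancel₀ _ hp0]
  have h2 := congrArg m hrel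
  rw [map_smul, hm, hm] at h2
  exact Submodule.mem_span_singleton.2 ⟨q / p, h2.symm⟩

/-- Fix fractional ideals `Λ₁, …, Λ_h ⊆ K` representing the ideal classes of
`Cl(R)` (every fractional ideal is `c • Λ_i` for some `i` and nonzero `c ∈ K`).  If `(Λ, φ)`
and `(Λ', φ')` are commensurable 1-dimensional `K`-lattices, then there exists a nonzero
`k ∈ ℂ` with `kΛ = Λ_i` (as submodules of `ℂ`) for some `i`, and `kΛ' ⊆ K`. -/
theorem stmt7 (K : Type*) [Field K] [NumberField K] [Algebra K ℂ]
    [Algebra (𝓞 K) ℂ] [IsScalarTower (𝓞 K) K ℂ]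
    (hdeg : Module.finrank ℚ K = 2) (himag : IsEmpty (K →+* ℝ))
    (h : ℕ) (Λs : Fin h → Submodule (𝓞 K) K)
    (hΛsfg : ∀ i, (Λs i).FG) (hΛsne : ∀ i, Λs i ≠ ⊥)
    (hrep : ∀ J : Submodule (𝓞 K) K, J.FG → J ≠ ⊥ →
      ∃ (i : Fin h) (c : K), c ≠ 0 ∧
        J.map ((LinearMap.mul K K c).restrictScalars (𝓞 K)) = Λs i)
    (L L' : OneDimKLattice K) (hcomm : L.Commensurable L') :
    ∃ k : ℂ, k ≠ 0 ∧
      (∃ i : Fin h,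
        L.Λ.map ((LinearMap.mul ℂ ℂ k).restrictScalars (𝓞 K)) =
          (Λs i).map ((Algebra.linearMap K ℂ).restrictScalars (𝓞 K))) ∧
      (((L'.Λ.map ((LinearMap.mul ℂ ℂ k).restrictScalars (𝓞 K))) : Set ℂ) ⊆
        Set.range (algebraMap K ℂ)) := by
  obtain ⟨v, hv, hv0, hspan⟩ := L.exists_span_le
  have hmul (w : ℂ) (hw : w ∈ Submodule.span K (L.Λ : Set ℂ)) :
      ∃ a : K, algebraMap K ℂ a = v⁻¹ * w := by
    obtain ⟨a, rfl⟩ := Submodule.mem_span_singleton.1 (hspan hw)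
    exact ⟨a, by rw [Algebra.smul_def]; field_simp⟩
  let ι : K →ₗ[𝓞 K] ℂ := (Algebra.linearMap K ℂ).restrictScalars (𝓞 K)
  have hι : Function.Injective ι := (algebraMap K ℂ).injective
  let M : Submodule (𝓞 K) ℂ := L.Λ.map ((LinearMap.mul ℂ ℂ v⁻¹).restrictScalars (𝓞 K))
  have hM : (M.comap ι).map ι = M := by
    apply Submodule.map_comap_eq_of_le
    rintro _ ⟨w, hw, rfl⟩
    exact hmul w (Submodule.subset_span hw)
  have hfg : (M.comap ι).FG := by
    apply Submodule.fg_of_fg_map_injective ι hι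
    rw [hM]
    exact L.fg.map _
  have hne : M.comap ι ≠ ⊥ := by
    intro hbot
    rw [hbot, Submodule.map_bot] at hM
    have h1 : v⁻¹ * v ∈ M := ⟨v, hv, rfl⟩
    rw [← hM, Submodule.mem_bot, inv_mul_cancel₀ hv0] at h1
    exact one_ne_zero h1
  obtain ⟨i, c, hc, hi⟩ := hrep _ hfg hne
  have hc' : algebraMap K ℂ c ≠ 0 := by simpa using hc
  refine ⟨algebraMap K ℂ c * v⁻¹, mul_ne_zero hc' (inv_ne_zero hv0), ⟨i, ?_⟩, ?_⟩
  -- Both sides are the dilate by `c` of `M = v⁻¹Λ`, since `M` is the image of its preimage in `K`.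
  · have h1 : L.Λ.map ((LinearMap.mul ℂ ℂ (algebraMap K ℂ c * v⁻¹)).restrictScalars (𝓞 K)) =
        M.map ((LinearMap.mul ℂ ℂ (algebraMap K ℂ c)).restrictScalars (𝓞 K)) := by
      rw [← Submodule.map_comp]
      congr 1
      ext z
      exact mul_assoc _ _ _
    rw [h1, ← hM, ← hi, ← Submodule.map_comp, ← Submodule.map_comp]
    congr 1
    ext z
    exact (map_mul (algebraMap K ℂ) c z).symm
  · rintro _ ⟨w, hw, rfl⟩
    obtain ⟨a, ha⟩ := hmul w (hcomm.1 ▸ Submodule.subset_span hw)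
    refine ⟨c * a, ?_⟩
    rw [map_mul, ha]
    exact (mul_assoc _ _ _).symm
end

section
/- For every x ∈ V the element y·i(y)⁻¹ ∈ G is independent of the choice of y ∈ G with π(y) = x/2; denoting this element τ(x), the resulting map τ : V → G satisfies π(τ(x)) = x for all x ∈ V, i.e. τ is a section of π. -/
/-- For every `x ∈ V = G ⧸ Z` the element `y * (i y)⁻¹` is independent of the
choice of `y ∈ G` projecting to `x/2`, and the resulting map `τ : V → G` is a section of the
projection `π : G → V`.  Here `G` is a group, `Z` a central subgroup with abelian, uniquely
2-divisible quotient `V` (the map `half` picks the unique half of each element), and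
`i : G → G` is a homomorphism with `i ∘ i = id`, fixing `Z` pointwise, with
`π (i g) = (π g)⁻¹`. -/
theorem stmt11 (G : Type*) [Group G] (Z : Subgroup G) [Z.Normal]
    (hZcentral : Z ≤ Subgroup.center G)
    (hV : ∀ u v : G ⧸ Z, u * v = v * u)
    (half : G ⧸ Z → G ⧸ Z)
    (hhalf : ∀ x : G ⧸ Z, half x * half x = x)
    (hhalfuniq : ∀ x y : G ⧸ Z, y * y = x → y = half x)
    (i : G →* G)
    (hi : ∀ g : G, i (i g) = g)
    (hiZ : ∀ z : G, z ∈ Z → i z = z)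
    (hiπ : ∀ g : G, (↑(i g) : G ⧸ Z) = (↑g : G ⧸ Z)⁻¹) :
    (∀ x : G ⧸ Z, ∀ y y' : G, (↑y : G ⧸ Z) = half x → (↑y' : G ⧸ Z) = half x →
        y * (i y)⁻¹ = y' * (i y')⁻¹) ∧
    (∀ x : G ⧸ Z, ∀ y : G, (↑y : G ⧸ Z) = half x →
        (↑(y * (i y)⁻¹) : G ⧸ Z) = x) := by
  refine ⟨fun x y y' hy hy' => ?_, fun x y hy => ?_⟩
  · -- Two lifts differ by some `z ∈ Z`, which `i` fixes, so `z` cancels in `y * (i y)⁻¹`.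
    have hz : y⁻¹ * y' ∈ Z := QuotientGroup.eq.mp (hy.trans hy'.symm)
    obtain ⟨z, rfl⟩ : ∃ z, y' = y * z := ⟨y⁻¹ * y', by group⟩
    rw [inv_mul_cancel_left] at hz
    rw [map_mul, hiZ z hz]
    group
  · rw [QuotientGroup.mk_mul, QuotientGroup.mk_inv, hiπ, inv_inv, hy, hhalf]
end

section
/- For all x, y ∈ V one has τ(x)·τ(y) = e(x/2, y)·τ(x + y), where τ(x) := y₀·i(y₀)⁻¹ for any y₀ ∈ G with π(y₀) = x/2. -/
/-!
Write `T = b * (i b)⁻¹`, where `a`, `b` lift `x/2`, `y/2`. The element `c * (i c)⁻¹` is unchanged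
when `c` is multiplied on the right by a fixed point of `i`, so `τ (x + y)` may be computed from
the lift `a * b`, which gives `a * T * (i a)⁻¹`. Both `T` and `w` lift `y`, so the commutator
`e (x/2, y)` equals `⁅a, T⁆`. Finally `(i a)⁻¹` differs from `a` by a central element, so moving `T`
past `(i a)⁻¹` costs exactly the central factor `⁅a, T⁆`.
-/

/-- Commutators are unchanged when both entries are multiplied by central elements. -/
lemma commutator_mul_central {G : Type*} [Group G] {a b s t : G}
    (hs : ∀ g, g * s = s * g) (ht : ∀ g, g * t = t * g) :
    (a * s) * (b * t) * (a * s)⁻¹ * (b * t)⁻¹ = a * b * a⁻¹ * b⁻¹ := by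
  have h1 : (a * s) * (b * t) = a * b * (t * s) := by
    rw [mul_assoc a s, ← mul_assoc s b, ← hs b, mul_assoc b, ← hs t, mul_assoc]
  have h2 : (a * s)⁻¹ * (b * t)⁻¹ = (t * s)⁻¹ * (a⁻¹ * b⁻¹) := by
    rw [← mul_inv_rev, ← mul_inv_rev, ← mul_inv_rev, mul_assoc b, ← mul_assoc t, ← ht a,
      mul_assoc a, ← mul_assoc b, hs t, ← hs t]
  rw [mul_assoc, h1, h2]
  group

/-- If the commutator `⁅a, T⁆` and `p` are central, then moving `T` past `a * p` costs `⁅a, T⁆`. -/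
lemma mul_eq_commutator_mul {G : Type*} [Group G] {a T p : G}
    (hk : ∀ g, g * (a * T * a⁻¹ * T⁻¹) = (a * T * a⁻¹ * T⁻¹) * g) (hp : ∀ g, g * p = p * g) :
    (a * (a * p)) * T = (a * T * a⁻¹ * T⁻¹) * (a * T * (a * p)) := by
  calc (a * (a * p)) * T = a * (a * T * a⁻¹ * T⁻¹) * (T * (a * p)) := by
        rw [mul_assoc a (a * p), mul_assoc a p, ← hp T]; group
    _ = _ := by rw [hk a]; simp only [mul_assoc]


/-- In the setting of the adelic Heisenberg group abstraction
(`G` a group, `Z` a central subgroup with abelian uniquely 2-divisible quotient `V = G ⧸ Z`,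
`i : G → G` an involutive homomorphism fixing `Z` with `π (i g) = (π g)⁻¹`, and
`τ x := y₀ * (i y₀)⁻¹` for any lift `y₀` of `x/2`), one has
`τ(x) · τ(y) = e(x/2, y) · τ(x + y)`, where `e` is the commutator pairing on `V`
computed on arbitrary lifts. -/
theorem stmt12 (G : Type*) [Group G] (Z : Subgroup G) [Z.Normal]
    (hZcentral : Z ≤ Subgroup.center G)
    (hV : ∀ u v : G ⧸ Z, u * v = v * u)
    (half : G ⧸ Z → G ⧸ Z)
    (hhalf : ∀ x : G ⧸ Z, half x * half x = x)
    (hhalfuniq : ∀ x y : G ⧸ Z, y * y = x → y = half x)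
    (i : G →* G)
    (hi : ∀ g : G, i (i g) = g)
    (hiZ : ∀ z : G, z ∈ Z → i z = z)
    (hiπ : ∀ g : G, (↑(i g) : G ⧸ Z) = (↑g : G ⧸ Z)⁻¹) :
    ∀ x y : G ⧸ Z, ∀ a b c u w : G,
      (↑a : G ⧸ Z) = half x → (↑b : G ⧸ Z) = half y → (↑c : G ⧸ Z) = half (x * y) →
      (↑u : G ⧸ Z) = half x → (↑w : G ⧸ Z) = y →
      (a * (i a)⁻¹) * (b * (i b)⁻¹) = (u * w * u⁻¹ * w⁻¹) * (c * (i c)⁻¹) := by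
  intro x y a b c u w ha hb hc hu hw
  have cen : ∀ z ∈ Z, ∀ g : G, g * z = z * g := fun z hz =>
    Subgroup.mem_center_iff.mp (hZcentral hz)
  have hab : half (x * y) = half x * half y := by
    refine (hhalfuniq _ _ ?_).symm
    calc half x * half y * (half x * half y)
        = half x * (half y * half x) * half y := by group
      _ = half x * half x * (half y * half y) := by rw [hV (half y)]; group
      _ = x * y := by rw [hhalf, hhalf]
  have hr : (a * b)⁻¹ * c ∈ Z := by
    rw [← QuotientGroup.eq, QuotientGroup.mk_mul, ha, hb, hc, hab]
  have hs : a⁻¹ * u ∈ Z := by rw [← QuotientGroup.eq, ha, hu]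
  have hp : a⁻¹ * (i a)⁻¹ ∈ Z := by
    rw [← QuotientGroup.eq, QuotientGroup.mk_inv, hiπ, inv_inv]
  obtain ⟨T, hT⟩ : ∃ T, T = b * (i b)⁻¹ := ⟨_, rfl⟩
  have ht : T⁻¹ * w ∈ Z := by
    rw [← QuotientGroup.eq, hT, QuotientGroup.mk_mul, QuotientGroup.mk_inv, hiπ, inv_inv, hb,
      hhalf, hw]
  have hk : a * T * a⁻¹ * T⁻¹ ∈ Z := by
    rw [← QuotientGroup.eq_one_iff]
    simp only [QuotientGroup.mk_mul, QuotientGroup.mk_inv]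
    rw [hV (a : G ⧸ Z) T]
    group
  have hcomm : u * w * u⁻¹ * w⁻¹ = a * T * a⁻¹ * T⁻¹ := by
    simpa only [mul_inv_cancel_left] using
      commutator_mul_central (a := a) (b := T) (cen _ hs) (cen _ ht)
  have hτ : c * (i c)⁻¹ = a * T * (i a)⁻¹ := by
    have hic : i c = i a * i b * ((a * b)⁻¹ * c) := by
      rw [← hiZ _ hr, ← map_mul, ← map_mul, mul_inv_cancel_left]
    rw [hic, hT]
    group
  have key := mul_eq_commutator_mul (cen _ hk) (cen _ hp)
  rw [mul_inv_cancel_left] at key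
  rw [hcomm, hτ, ← hT, key]
end
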